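/- (Preservation of natural landmark orderings under concretization.) Let M be a STRIPS planning model over fluents F, P ⊆ F, and φ, φ' : Set F → Prop. Say φ ≺_nat φ' holds in a model N if for every valid plan π ∈ Π_N with state trajectory S₀, …, Sₙ from the initial state and every index j ≤ n such that φ' holds at S_j and φ' holds at no S_k with k < j (φ' is made true for the first time at step j), there exists i < j with φ(S_i). If φ ≺_nat φ' holds in the projection f_P(M), then the lifted predicates S ↦ φ(S \ P) and S ↦ φ'(S \ P) satisfy the natural ordering in M. -/

import Mathlib

/-- A STRIPS planning model over fluents `F` and action labels `A`. -/
structure Strips (F : Type*) (A : Type*) where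
  prec : A → Set F
  add : A → Set F
  del : A → Set F
  I : Set F
  G : Set F

/-- Result of applying action `a` in state `S`. -/
def Strips.res {F A : Type*} (M : Strips F A) (a : A) (S : Set F) : Set F :=
  (S \ M.del a) ∪ M.add a

/-- The state trajectory `S₀, S₁, …, Sₙ` of a plan from a state. -/
def Strips.traj {F A : Type*} (M : Strips F A) : List A → Set F → List (Set F)
  | [], S => [S]
  | a :: π, S => S :: M.traj π (M.res a S)

/-- A plan is executable from `S` if each action's precondition holds when applied. -/
def Strips.exec {F A : Type*} (M : Strips F A) : List A → Set F → Prop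
  | [], _ => True
  | a :: π, S => M.prec a ⊆ S ∧ M.exec π (M.res a S)

/-- The final state `Sₙ` of the trajectory of a plan from a state. -/
def Strips.finalState {F A : Type*} (M : Strips F A) (π : List A) (S : Set F) : Set F :=
  π.foldl (fun T a => M.res a T) S

/-- The state `S_k` of the trajectory of a plan from a state. -/
def Strips.stateAt {F A : Type*} (M : Strips F A) (π : List A) (S : Set F) (k : ℕ) : Set F :=
  M.finalState (π.take k) S

/-- A plan is valid if it is executable from the initial state and achieves the goal. -/
def Strips.Valid {F A : Type*} (M : Strips F A) (π : List A) : Prop :=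
  M.exec π M.I ∧ M.G ⊆ M.finalState π M.I

/-- The set `Π_M` of valid plans of `M`. -/
def Strips.Plans {F A : Type*} (M : Strips F A) : Set (List A) :=
  {π | M.Valid π}

/-- The projection `f_P(M)` of a model, projecting out the fluents in `P`. -/
def Strips.proj {F A : Type*} (M : Strips F A) (P : Set F) : Strips F A where
  prec a := M.prec a \ P
  add a := M.add a \ P
  del a := M.del a \ P
  I := M.I \ P
  G := M.G \ P

/-- Natural landmark ordering `φ ≺_nat φ'` in model `N`. -/
def NatOrd {F A : Type*} (N : Strips F A) (φ φ' : Set F → Prop) : Prop :=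
  ∀ π ∈ N.Plans, ∀ j ≤ π.length,
    φ' (N.stateAt π N.I j) → (∀ k < j, ¬ φ' (N.stateAt π N.I k)) →
      ∃ i < j, φ (N.stateAt π N.I i)

theorem proj_res_diff {F A : Type*} (M : Strips F A) (P : Set F) (a : A) (S : Set F) :
    (M.proj P).res a (S \ P) = M.res a S \ P := by
  ext x
  simp only [Strips.res, Strips.proj, Set.mem_union, Set.mem_diff]
  tauto

theorem proj_finalState_diff {F A : Type*} (M : Strips F A) (P : Set F) (π : List A) :
    ∀ S : Set F, (M.proj P).finalState π (S \ P) = M.finalState π S \ P := by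
  induction π with
  | nil => intro S; rfl
  | cons a π ih =>
    intro S
    have := ih (M.res a S)
    rw [← proj_res_diff] at this
    exact this

theorem proj_exec_diff {F A : Type*} (M : Strips F A) (P : Set F) (π : List A) :
    ∀ S : Set F, M.exec π S → (M.proj P).exec π (S \ P) := by
  induction π with
  | nil => intro S _; trivial
  | cons a π ih =>
    intro S h
    refine ⟨Set.diff_subset_diff_left h.1, ?_⟩
    rw [proj_res_diff]
    exact ih _ h.2

theorem stmt8 {F A : Type*} (M : Strips F A) (P : Set F) (φ φ' : Set F → Prop)
    (h : NatOrd (M.proj P) φ φ') :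
    NatOrd M (fun S => φ (S \ P)) (fun S => φ' (S \ P)) := by
  intro π hπ j hj h1 h2
  have key : ∀ k, (M.proj P).stateAt π (M.proj P).I k = M.stateAt π M.I k \ P :=
    fun k => proj_finalState_diff M P (π.take k) M.I
  have hv : π ∈ (M.proj P).Plans := by
    refine ⟨proj_exec_diff M P π M.I hπ.1, ?_⟩
    have e : (M.proj P).finalState π (M.proj P).I = M.finalState π M.I \ P :=
      proj_finalState_diff M P π M.I
    rw [e]
    exact Set.diff_subset_diff_left hπ.2
  have := h π hv j hj
  simp only [key] at this
  exact this h1 h2
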